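/- arXiv:2010.01059 — 8 statements merged into one kernel-verified Lean document; each statement's English description precedes it below -/
import Mathlib

section
/- Fix positive integers mu and K_c and pairwise distinct elements ftilde_1, ..., ftilde_{max(mu,K_c)} of a field F. Define the pole assignment f_{j,i} (for positive integers j and i with 1 <= i <= K_c) by: if mu >= K_c then f_{j,i} = ftilde_{((j-i) mod mu)+1}, and if mu < K_c then f_{j,i} = ftilde_{((i-1-((j-1) mod mu)) mod K_c)+1}. Then for every i in [K_c] and all positive integers m <= n with n-m+1 <= mu, the elements f_{j,i} for j in {m, m+1, ..., n} are pairwise distinct. -/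
theorem aux_emod_inj (x y k : ℤ) (h : x % k = y % k) (h1 : x - y < k) (h2 : y - x < k) :
    x = y := by
  have hd : k ∣ x - y := Int.ModEq.dvd (Eq.symm h)
  have := Int.eq_zero_of_abs_lt_dvd hd (by rw [abs_lt]; constructor <;> linarith)
  linarith

theorem aux_toNat_inj (g : ℕ → ℕ → Prop) (x y : ℤ) (k M : ℕ) (hk : 0 < k) (hM : k ≤ M)
    (hg : ∀ a b : ℕ, a < M → b < M → g a b → a = b)
    (h : g (x % k).toNat (y % k).toNat) (h1 : x - y < k) (h2 : y - x < k) : x = y := by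
  have hk' : (0 : ℤ) < k := by exact_mod_cast hk
  have a1 := Int.emod_nonneg x hk'.ne'
  have a2 := Int.emod_lt_of_pos x hk'
  have b1 := Int.emod_nonneg y hk'.ne'
  have b2 := Int.emod_lt_of_pos y hk'
  have := hg _ _ (by omega) (by omega) h
  exact aux_emod_inj x y k (by omega) h1 h2

/-- Proposition 1 (pole assignment distinctness along rows): for the cyclic pole
assignment `f`, for every `i ∈ [K_c]` and all positive integers `m ≤ n` with
`n - m + 1 ≤ μ`, the elements `f j i` for `j ∈ {m, …, n}` are pairwise distinct.
Here `ftilde k` denotes the element `ftilde_{k+1}` of the paper (0-indexed), and the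
`ftilde`'s are pairwise distinct among indices `< max μ K_c`. -/
theorem acsa_pole_assignment_row_distinct
    {F : Type*} [Field F] (mu Kc : ℕ) (hmu : 0 < mu) (hKc : 0 < Kc)
    (ftilde : ℕ → F)
    (hdist : ∀ a b : ℕ, a < max mu Kc → b < max mu Kc → ftilde a = ftilde b → a = b)
    (f : ℕ → ℕ → F)
    (hf : ∀ j i : ℕ,
      f j i =
        if Kc ≤ mu then
          ftilde ((((j : ℤ) - (i : ℤ)) % (mu : ℤ)).toNat)
        else
          ftilde ((((i : ℤ) - 1 - (((j : ℤ) - 1) % (mu : ℤ))) % (Kc : ℤ)).toNat))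
    (i : ℕ) (hi1 : 1 ≤ i) (hi2 : i ≤ Kc)
    (m n : ℕ) (hm : 1 ≤ m) (hmn : m ≤ n) (hlen : n - m + 1 ≤ mu) :
    ∀ j j' : ℕ, m ≤ j → j ≤ n → m ≤ j' → j' ≤ n → f j i = f j' i → j = j' := by
  intro j j' h1 h2 h3 h4 h
  have hmu' : (0 : ℤ) < mu := by exact_mod_cast hmu
  rw [hf, hf] at h
  split_ifs at h with hc
  · have := aux_toNat_inj (fun a b => ftilde a = ftilde b) _ _ mu _ hmu (le_max_left _ _)
      hdist h (by omega) (by omega)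
    omega
  · have a1 := Int.emod_nonneg ((j : ℤ) - 1) hmu'.ne'
    have a2 := Int.emod_lt_of_pos ((j : ℤ) - 1) hmu'
    have b1 := Int.emod_nonneg ((j' : ℤ) - 1) hmu'.ne'
    have b2 := Int.emod_lt_of_pos ((j' : ℤ) - 1) hmu'
    have := aux_toNat_inj (fun a b => ftilde a = ftilde b) _ _ Kc _ hKc (le_max_right _ _)
      hdist h (by omega) (by omega)
    have := aux_emod_inj ((j : ℤ) - 1) ((j' : ℤ) - 1) mu (by omega) (by omega) (by omega)
    omega
end

section
/- Fix positive integers mu and K_c and pairwise distinct elements ftilde_1, ..., ftilde_{max(mu,K_c)} of a field F. Define the pole assignment f_{j,i} (for positive integers j and i with 1 <= i <= K_c) by: if mu >= K_c then f_{j,i} = ftilde_{((j-i) mod mu)+1}, and if mu < K_c then f_{j,i} = ftilde_{((i-1-((j-1) mod mu)) mod K_c)+1}. Then for every positive integer j, the elements f_{j,1}, f_{j,2}, ..., f_{j,K_c} are pairwise distinct. -/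
theorem acsa_aux (m M : ℕ) (hm : 0 < m) (hM : m ≤ M) {F : Type*} (g : ℕ → F)
    (hd : ∀ a b : ℕ, a < M → b < M → g a = g b → a = b) (x y : ℤ)
    (h : g ((x % (m : ℤ)).toNat) = g ((y % (m : ℤ)).toNat))
    (h1 : x - y < m) (h2 : y - x < m) : x = y := by
  have hm' : (0 : ℤ) < m := by exact_mod_cast hm
  have a1 := Int.emod_nonneg x hm'.ne'
  have a2 := Int.emod_lt_of_pos x hm'
  have b1 := Int.emod_nonneg y hm'.ne'
  have b2 := Int.emod_lt_of_pos y hm'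
  have e := hd _ _ (by omega) (by omega) h
  have e2 : x % (m : ℤ) = y % (m : ℤ) := by omega
  have e3 : (m : ℤ) ∣ x - y := Int.ModEq.dvd (Eq.symm e2)
  have := Int.eq_zero_of_abs_lt_dvd e3 (abs_lt.2 ⟨by linarith, h1⟩)
  omega

/-- Proposition 2 (pole assignment distinctness along columns): for the cyclic pole
assignment `f`, for every positive integer `j`, the elements `f j 1, …, f j K_c` are
pairwise distinct. Here `ftilde k` denotes the element `ftilde_{k+1}` of the paper
(0-indexed), and the `ftilde`'s are pairwise distinct among indices `< max μ K_c`. -/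
theorem acsa_pole_assignment_col_distinct
    {F : Type*} [Field F] (mu Kc : ℕ) (hmu : 0 < mu) (hKc : 0 < Kc)
    (ftilde : ℕ → F)
    (hdist : ∀ a b : ℕ, a < max mu Kc → b < max mu Kc → ftilde a = ftilde b → a = b)
    (f : ℕ → ℕ → F)
    (hf : ∀ j i : ℕ,
      f j i =
        if Kc ≤ mu then
          ftilde ((((j : ℤ) - (i : ℤ)) % (mu : ℤ)).toNat)
        else
          ftilde ((((i : ℤ) - 1 - (((j : ℤ) - 1) % (mu : ℤ))) % (Kc : ℤ)).toNat))
    (j : ℕ) (hj : 1 ≤ j) :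
    ∀ i i' : ℕ, 1 ≤ i → i ≤ Kc → 1 ≤ i' → i' ≤ Kc → f j i = f j i' → i = i' := by
  intro i i' h1 h2 h3 h4 h
  rw [hf, hf] at h
  split_ifs at h with hc
  · have := acsa_aux mu _ hmu (le_max_left mu Kc) ftilde hdist _ _ h (by omega) (by omega)
    omega
  · generalize ((j : ℤ) - 1) % (mu : ℤ) = r at h
    have := acsa_aux Kc _ hKc (le_max_right mu Kc) ftilde hdist _ _ h (by omega) (by omega)
    omega
end

section
/- Let F be a field, let R and V be natural numbers, and let f_1, ..., f_R and a_1, ..., a_{R+V} be elements of F such that all R + (R+V) elements f_1, ..., f_R, a_1, ..., a_{R+V} are pairwise distinct. Then the (R+V) x (R+V) matrix M over F whose entry in row n and column j equals 1/(f_j - a_n) for 1 <= j <= R, and equals a_n^{m-1} in column R+m for 1 <= m <= V, is invertible (equivalently, its determinant is nonzero). -/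
/-- Nonsingularity of Cauchy–Vandermonde matrices: if the poles `f 1, …, f R` and the
evaluation points `a 1, …, a (R+V)` are pairwise distinct (all `R + (R+V)` elements
together), then the `(R+V) × (R+V)` matrix `M` whose entry in row `n`, column `j` is
`1 / (f j - a n)` for the first `R` columns and `(a n)^(m-1)` in column `R + m` for
`1 ≤ m ≤ V`, has nonzero determinant (is invertible). -/
theorem cauchy_vandermonde_det_ne_zero
    {F : Type*} [Field F] (R V : ℕ)
    (f : Fin R → F) (a : Fin (R + V) → F)
    (hf : Function.Injective f) (ha : Function.Injective a)
    (hfa : ∀ (j : Fin R) (n : Fin (R + V)), f j ≠ a n)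
    (M : Matrix (Fin (R + V)) (Fin (R + V)) F)
    (hM₁ : ∀ (n : Fin (R + V)) (j : Fin (R + V)) (h : (j : ℕ) < R),
      M n j = 1 / (f ⟨j, h⟩ - a n))
    (hM₂ : ∀ (n : Fin (R + V)) (j : Fin (R + V)), R ≤ (j : ℕ) →
      M n j = a n ^ ((j : ℕ) - R)) :
    M.det ≠ 0 ∧ IsUnit M := by
  classical
  have key : M.det ≠ 0 := by
    intro hdet
    obtain ⟨v, hv0, hv⟩ := Matrix.exists_mulVec_eq_zero_iff.mpr hdet
    apply hv0
    let L : Fin R → Polynomial F := fun i => Polynomial.C (f i) - Polynomial.X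
    have hLdeg : ∀ i, (L i).natDegree ≤ 1 := fun i => by
      refine (Polynomial.natDegree_sub_le _ _).trans ?_
      simp
    have hprod : ∀ s : Finset (Fin R), (∏ i ∈ s, L i).natDegree ≤ s.card := fun s => by
      refine (Polynomial.natDegree_prod_le _ _).trans ?_
      refine (Finset.sum_le_sum (fun i _ => hLdeg i)).trans ?_
      simp
    let Q : Polynomial F :=
      ∑ m : Fin V, Polynomial.C (v (Fin.natAdd R m)) * Polynomial.X ^ (m : ℕ)
    let P1 : Polynomial F := ∑ j : Fin R, Polynomial.C (v (Fin.castAdd V j)) *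
      ∏ i ∈ Finset.univ.erase j, L i
    let P : Polynomial F := P1 + Q * ∏ i, L i
    have hdegP : P.degree < ((Finset.univ : Finset (Fin (R + V))).card : WithBot ℕ) := by
      rw [Finset.card_univ, Fintype.card_fin, ← Polynomial.mem_degreeLT]
      refine Submodule.add_mem _ (Submodule.sum_mem _ fun j _ => ?_) ?_
      · rw [Polynomial.mem_degreeLT]
        refine (Polynomial.degree_le_natDegree).trans_lt ?_
        have h1 := hprod (Finset.univ.erase j)
        rw [Finset.card_erase_of_mem (Finset.mem_univ j), Finset.card_univ,
          Fintype.card_fin] at h1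
        have h2 := Polynomial.natDegree_C_mul_le (v (Fin.castAdd V j))
          (∏ i ∈ Finset.univ.erase j, L i)
        have h3 := j.2
        exact_mod_cast (by omega : _ < R + V)
      · rw [Finset.sum_mul]
        refine Submodule.sum_mem _ fun m _ => ?_
        rw [Polynomial.mem_degreeLT]
        refine (Polynomial.degree_le_natDegree).trans_lt ?_
        have h1 := hprod Finset.univ
        rw [Finset.card_univ, Fintype.card_fin] at h1
        have h2 := Polynomial.natDegree_C_mul_X_pow_le (v (Fin.natAdd R m)) (m : ℕ)
        have h4 := Polynomial.natDegree_mul_le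
          (p := Polynomial.C (v (Fin.natAdd R m)) * Polynomial.X ^ (m : ℕ)) (q := ∏ i, L i)
        have h3 := m.2
        exact_mod_cast (by omega : _ < R + V)
    have hPa : ∀ n, P.eval (a n) = 0 := by
      intro n
      have h := congrFun hv n
      simp only [Matrix.mulVec, dotProduct, Pi.zero_apply, Fin.sum_univ_add] at h
      have e : P.eval (a n) = (∏ i, (f i - a n)) *
          (∑ j : Fin R, M n (Fin.castAdd V j) * v (Fin.castAdd V j) +
           ∑ m : Fin V, M n (Fin.natAdd R m) * v (Fin.natAdd R m)) := by
        simp only [P, P1, Q, L, Polynomial.eval_add, Polynomial.eval_mul,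
          Polynomial.eval_finsetSum, Polynomial.eval_prod, Polynomial.eval_C,
          Polynomial.eval_sub, Polynomial.eval_X, Polynomial.eval_pow]
        rw [mul_add]
        congr 1
        · rw [Finset.mul_sum]
          refine Finset.sum_congr rfl fun j _ => ?_
          rw [hM₁ n (Fin.castAdd V j) (by simp),
            ← Finset.mul_prod_erase Finset.univ _ (Finset.mem_univ j)]
          have hne : f j - a n ≠ 0 := sub_ne_zero.mpr (hfa j n)
          simp only [Fin.val_castAdd, Fin.eta]
          field_simp
        · rw [mul_comm]
          congr 1
          refine Finset.sum_congr rfl fun m _ => ?_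
          rw [hM₂ n (Fin.natAdd R m) (by simp)]
          simp [mul_comm]
      rw [e, h, mul_zero]
    have hP : P = 0 :=
      Polynomial.eq_zero_of_degree_lt_of_eval_index_eq_zero (v := a) Finset.univ
        ha.injOn hdegP (fun n _ => hPa n)
    have hc : ∀ j : Fin R, v (Fin.castAdd V j) = 0 := by
      intro j
      have h : P.eval (f j) = 0 := by rw [hP, Polynomial.eval_zero]
      simp only [P, P1, L, Polynomial.eval_add, Polynomial.eval_mul,
        Polynomial.eval_finsetSum, Polynomial.eval_prod, Polynomial.eval_C,
        Polynomial.eval_sub, Polynomial.eval_X] at h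
      rw [Finset.prod_eq_zero (Finset.mem_univ j) (sub_self _), mul_zero, add_zero,
        Finset.sum_eq_single j] at h
      · refine (mul_eq_zero.mp h).resolve_right ?_
        refine Finset.prod_ne_zero_iff.mpr fun i hi => sub_ne_zero.mpr fun hh => ?_
        exact (Finset.mem_erase.mp hi).1 (hf hh)
      · intro k _ hk
        rw [Finset.prod_eq_zero (Finset.mem_erase.mpr ⟨hk.symm, Finset.mem_univ j⟩)
          (sub_self _), mul_zero]
      · simp
    have hQ : Q = 0 := by
      have h : Q * ∏ i, L i = 0 := by
        have : P1 = 0 := by simp [P1, hc]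
        simpa [P, this] using hP
      refine (mul_eq_zero.mp h).resolve_right ?_
      refine Finset.prod_ne_zero_iff.mpr fun i _ hh => ?_
      have := congrArg (fun p => Polynomial.coeff p 1) hh
      simp [L, Polynomial.coeff_C] at this
    have hq : ∀ m : Fin V, v (Fin.natAdd R m) = 0 := by
      intro m
      have h : Q.coeff (m : ℕ) = 0 := by rw [hQ, Polynomial.coeff_zero]
      simpa [Q, Polynomial.finsetSum_coeff, Polynomial.coeff_C_mul,
        Polynomial.coeff_X_pow, Fin.val_inj] using h
    funext k
    exact Fin.addCases (motive := fun k => v k = 0) hc hq k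
  exact ⟨key, (Matrix.isUnit_iff_isUnit_det M).mpr (isUnit_iff_ne_zero.mpr key)⟩
end

section
/- Let F be a field, R and V natural numbers with R + V >= 1, f_1, ..., f_R pairwise distinct elements of F, and coefficients w_1, ..., w_R in F and c_1, ..., c_V in F, not all zero. Define g on F \ {f_1,...,f_R} by g(alpha) = sum_{j=1}^R w_j/(alpha - f_j) + sum_{m=1}^V c_m alpha^{m-1}. Then g has at most R + V - 1 zeros, i.e., the set { alpha in F : alpha is not one of f_1,...,f_R and g(alpha) = 0 } has cardinality at most R + V - 1. -/
/-- Zero counting for Cauchy–Vandermonde evaluation functions: if `f 1, …, f R` are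
pairwise distinct, `R + V ≥ 1`, and the coefficients `w : Fin R → F`, `c : Fin V → F`
are not all zero, then the function
`g(α) = ∑ j, w j / (α - f j) + ∑ m, c m * α^(m-1)`
has at most `R + V - 1` zeros on `F \ {f 1, …, f R}`. -/
theorem cauchy_vandermonde_zero_count
    {F : Type*} [Field F] (R V : ℕ) (hRV : 1 ≤ R + V)
    (f : Fin R → F) (hf : Function.Injective f)
    (w : Fin R → F) (c : Fin V → F) (hne : w ≠ 0 ∨ c ≠ 0) :
    {α : F | (∀ j : Fin R, α ≠ f j) ∧
        (∑ j : Fin R, w j / (α - f j)) + (∑ m : Fin V, c m * α ^ (m : ℕ)) = 0}.Finite ∧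
    {α : F | (∀ j : Fin R, α ≠ f j) ∧
        (∑ j : Fin R, w j / (α - f j)) + (∑ m : Fin V, c m * α ^ (m : ℕ)) = 0}.ncard
      ≤ R + V - 1 := by
  classical
  let D : Polynomial F := ∏ i : Fin R, (Polynomial.X - Polynomial.C (f i))
  let E : Fin R → Polynomial F :=
    fun j => ∏ i ∈ Finset.univ.erase j, (Polynomial.X - Polynomial.C (f i))
  let Q : Polynomial F := ∑ m : Fin V, Polynomial.C (c m) * Polynomial.X ^ (m : ℕ)
  let P : Polynomial F := (∑ j : Fin R, Polynomial.C (w j) * E j) + Q * D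
  have hDdeg : D.natDegree = R := by
    simp [D]
  have hD0 : D ≠ 0 := (Polynomial.monic_prod_of_monic _ _
    (fun i _ => Polynomial.monic_X_sub_C (f i))).ne_zero
  have hEdeg : ∀ j, (E j).natDegree = R - 1 := by
    intro j
    simp [E, Finset.card_erase_of_mem]
  have hdeg : P.natDegree ≤ R + V - 1 := by
    refine (Polynomial.natDegree_add_le _ _).trans (max_le ?_ ?_)
    · refine Polynomial.natDegree_sum_le_of_forall_le _ _ (fun j _ => ?_)
      refine (Polynomial.natDegree_C_mul_le _ _).trans ?_
      rw [hEdeg]; omega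
    · simp only [Q, Finset.sum_mul]
      refine Polynomial.natDegree_sum_le_of_forall_le _ _ (fun m _ => ?_)
      refine Polynomial.natDegree_mul_le.trans ?_
      have h1 := Polynomial.natDegree_C_mul_X_pow_le (c m) (m : ℕ)
      have h2 := m.2
      omega
  have hEne : ∀ j k, j ≠ k → (E j).eval (f k) = 0 := by
    intro j k hjk
    simp only [E, Polynomial.eval_prod]
    exact Finset.prod_eq_zero (Finset.mem_erase.2 ⟨hjk.symm, Finset.mem_univ k⟩) (by simp)
  have hEeq : ∀ k, (E k).eval (f k) ≠ 0 := by
    intro k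
    simp only [E, Polynomial.eval_prod]
    refine Finset.prod_ne_zero_iff.2 (fun i hi => ?_)
    have := (Finset.mem_erase.1 hi).1
    simpa [sub_eq_zero] using fun h => this (hf h).symm
  have hDk : ∀ k, D.eval (f k) = 0 := by
    intro k
    simp only [D, Polynomial.eval_prod]
    exact Finset.prod_eq_zero (Finset.mem_univ k) (by simp)
  have hP0 : P ≠ 0 := by
    intro hP
    have hw : w = 0 := by
      funext k
      have h : P.eval (f k) = 0 := by rw [hP]; simp
      simp only [P, Polynomial.eval_add, Polynomial.eval_mul, hDk, mul_zero, add_zero,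
        Polynomial.eval_finset_sum, Polynomial.eval_C] at h
      rw [Finset.sum_eq_single k (fun j _ hj => by rw [hEne j k hj, mul_zero])
        (fun h => absurd (Finset.mem_univ k) h)] at h
      exact (mul_eq_zero.1 h).resolve_right (hEeq k)
    have hc : c = 0 := by
      have h : Q * D = 0 := by simpa [P, hw] using hP
      have hQ : Q = 0 := (mul_eq_zero.1 h).resolve_right hD0
      funext k
      have h2 : Q.coeff (k : ℕ) = 0 := by rw [hQ]; simp
      simp only [Q, Polynomial.finset_sum_coeff, Polynomial.coeff_C_mul_X_pow] at h2
      rw [Finset.sum_eq_single k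
        (fun j _ hj => if_neg (fun h => hj (Fin.ext h.symm)))
        (fun h => absurd (Finset.mem_univ k) h)] at h2
      simpa using h2
    exact hne.elim (fun h => h hw) (fun h => h hc)
  have hsub : {α : F | (∀ j : Fin R, α ≠ f j) ∧
        (∑ j : Fin R, w j / (α - f j)) + (∑ m : Fin V, c m * α ^ (m : ℕ)) = 0}
      ⊆ (P.roots.toFinset : Set F) := by
    rintro α ⟨hα, h0⟩
    rw [Finset.mem_coe, Multiset.mem_toFinset, Polynomial.mem_roots hP0, Polynomial.IsRoot.def]
    have hDE : ∀ j, D.eval α = (α - f j) * (E j).eval α := by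
      intro j
      have : D = (Polynomial.X - Polynomial.C (f j)) * E j :=
        (Finset.mul_prod_erase _ _ (Finset.mem_univ j)).symm
      rw [this]; simp
    have : P.eval α = ((∑ j : Fin R, w j / (α - f j)) +
        (∑ m : Fin V, c m * α ^ (m : ℕ))) * D.eval α := by
      simp only [P, Q, Polynomial.eval_add, Polynomial.eval_mul, Polynomial.eval_finset_sum,
        Polynomial.eval_C, Polynomial.eval_pow, Polynomial.eval_X, add_mul]
      congr 1
      rw [Finset.sum_mul]
      refine Finset.sum_congr rfl (fun j _ => ?_)
      have hj : α - f j ≠ 0 := sub_ne_zero.2 (hα j)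
      rw [hDE j, ← mul_assoc, div_mul_cancel₀ _ hj]
    rw [this, h0, zero_mul]
  refine ⟨(Finset.finite_toSet _).subset hsub, ?_⟩
  refine (Set.ncard_le_ncard hsub (Finset.finite_toSet _)).trans ?_
  rw [Set.ncard_coe_finset]
  exact (Multiset.toFinset_card_le _).trans ((Polynomial.card_roots' P).trans hdeg)
end

section
/- Let F be a field, R, V, B, N natural numbers with N >= R + V + 2B and R + V >= 1. Let f_1, ..., f_R be pairwise distinct elements of F and let a_1, ..., a_N be pairwise distinct elements of F such that no a_n equals any f_j. For a coefficient pair (w, c) with w in F^R and c in F^V, define its codeword E(w,c) in F^N by E(w,c)_n = sum_{j=1}^R w_j/(a_n - f_j) + sum_{m=1}^V c_m a_n^{m-1}. Then any two distinct coefficient pairs (w,c) != (w',c') produce codewords that differ in at least N - (R+V) + 1 >= 2B + 1 coordinates; consequently, for every y in F^N there is at most one coefficient pair (w,c) whose codeword E(w,c) differs from y in at most B coordinates. -/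
open Polynomial in
theorem cv_key {F : Type*} [Field F] [DecidableEq F] (R V : ℕ)
    (f : Fin R → F) (hf : Function.Injective f) (S : Finset F) (hS : R + V ≤ S.card)
    (hfa : ∀ x ∈ S, ∀ j, x ≠ f j) (w : Fin R → F) (c : Fin V → F)
    (h : ∀ x ∈ S, (∑ j : Fin R, w j / (x - f j)) + (∑ m : Fin V, c m * x ^ (m : ℕ)) = 0) :
    w = 0 ∧ c = 0 := by
  set Q : F[X] := ∏ i : Fin R, (X - C (f i)) with hQ
  set T : F[X] := ∑ m : Fin V, C (c m) * X ^ (m : ℕ) with hT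
  set L : F[X] := ∑ j : Fin R, C (w j) * ∏ i ∈ Finset.univ.erase j, (X - C (f i)) with hL
  have hQm : Q.Monic := monic_prod_of_monic _ _ (fun i _ => monic_X_sub_C (f i))
  have hQd : Q.degree = (R : ℕ) := by
    rw [hQ, degree_prod]; simp
  have hTd : T.degree < (V : ℕ) := by
    rw [← mem_degreeLT]
    refine Submodule.sum_mem _ fun m _ => ?_
    rw [mem_degreeLT]
    refine (degree_C_mul_X_pow_le _ _).trans_lt ?_
    exact_mod_cast m.2
  have hd : (L + T * Q).degree < ((R + V : ℕ) : WithBot ℕ) := by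
    rw [← mem_degreeLT]
    refine Submodule.add_mem _ (Submodule.sum_mem _ fun j _ => ?_) ?_
    · rw [← smul_eq_C_mul]
      refine Submodule.smul_mem _ _ ?_
      rw [mem_degreeLT, degree_prod]
      simp only [degree_X_sub_C, Finset.sum_const, Finset.card_erase_of_mem (Finset.mem_univ j),
        Finset.card_univ, Fintype.card_fin, nsmul_eq_mul, mul_one]
      have := j.2
      have h2 : R - 1 < R + V := by omega
      exact_mod_cast h2
    · rw [mem_degreeLT]
      by_cases hT0 : T = 0
      · rw [hT0, zero_mul, degree_zero]; exact WithBot.bot_lt_coe _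
      · rw [degree_mul, hQd, degree_eq_natDegree hT0]
        rw [degree_eq_natDegree hT0] at hTd
        have h1 : T.natDegree < V := by exact_mod_cast hTd
        have h2 : T.natDegree + R < R + V := by omega
        exact_mod_cast h2
  have hP : L + T * Q = 0 := by
    refine eq_zero_of_degree_lt_of_eval_finset_eq_zero S
      (hd.trans_le (by exact_mod_cast hS)) fun x hx => ?_
    have hx' := h x hx
    have e : (L + T * Q).eval x = ((∑ j : Fin R, w j / (x - f j))
        + (∑ m : Fin V, c m * x ^ (m : ℕ))) * ∏ i : Fin R, (x - f i) := by
      rw [add_mul]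
      simp only [hL, hT, hQ, eval_add, eval_mul, eval_finsetSum, eval_prod, eval_C, eval_X,
        eval_sub, eval_pow]
      congr 1
      rw [Finset.sum_mul]
      refine Finset.sum_congr rfl fun j _ => ?_
      rw [← Finset.mul_prod_erase _ _ (Finset.mem_univ j)]
      have := sub_ne_zero.2 (hfa x hx j)
      field_simp
    rw [e, hx', zero_mul]
  have hw : w = 0 := by
    funext j
    have e := congrArg (eval (f j)) hP
    have hQ0 : Q.eval (f j) = 0 := by
      rw [hQ, eval_prod]
      exact Finset.prod_eq_zero (Finset.mem_univ j) (by simp)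
    rw [eval_add, eval_mul, hQ0, mul_zero, add_zero, eval_zero, hL, eval_finsetSum,
      Finset.sum_eq_single j] at e
    · rw [eval_mul, eval_C, eval_prod] at e
      refine (mul_eq_zero.1 e).resolve_right (Finset.prod_ne_zero_iff.2 fun i hi => ?_)
      simp only [eval_sub, eval_X, eval_C]
      exact sub_ne_zero.2 fun hh => (Finset.mem_erase.1 hi).1 (hf hh).symm
    · intro b _ hb
      rw [eval_mul, eval_prod, Finset.prod_eq_zero (i := j), mul_zero]
      · simp [hb.symm]
      · simp
    · simp
  refine ⟨hw, ?_⟩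
  have hL0 : L = 0 := by simp [hL, hw]
  rw [hL0, zero_add] at hP
  have hT0 : T = 0 := (mul_eq_zero.1 hP).resolve_right hQm.ne_zero
  funext m
  have e := congrArg (fun p => coeff p (m : ℕ)) hT0
  simp only [hT, finsetSum_coeff, coeff_C_mul, coeff_X_pow, coeff_zero, Fin.val_inj] at e
  simpa using e

/-- MDS / Byzantine-tolerance property of Cauchy–Vandermonde codewords: with
`N ≥ R + V + 2B` and `R + V ≥ 1`, pairwise distinct poles `f`, pairwise distinct
evaluation points `a` avoiding the poles, and encoding
`E w c n = ∑ j, w j / (a n - f j) + ∑ m, c m * (a n)^(m-1)`,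
any two distinct coefficient pairs produce codewords at Hamming distance at least
`N - (R+V) + 1 ≥ 2B + 1`; consequently, for every `y : Fin N → F` there is at most one
coefficient pair whose codeword is within Hamming distance `B` of `y`. -/
theorem cauchy_vandermonde_mds_byzantine
    {F : Type*} [Field F] [DecidableEq F] (R V B N : ℕ)
    (hN : R + V + 2 * B ≤ N) (hRV : 1 ≤ R + V)
    (f : Fin R → F) (hf : Function.Injective f)
    (a : Fin N → F) (ha : Function.Injective a)
    (hfa : ∀ (n : Fin N) (j : Fin R), a n ≠ f j)
    (E : (Fin R → F) → (Fin V → F) → Fin N → F)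
    (hE : ∀ (w : Fin R → F) (c : Fin V → F) (n : Fin N),
      E w c n = (∑ j : Fin R, w j / (a n - f j)) + (∑ m : Fin V, c m * a n ^ (m : ℕ))) :
    (2 * B + 1 ≤ N - (R + V) + 1) ∧
    (∀ (w w' : Fin R → F) (c c' : Fin V → F), (w, c) ≠ (w', c') →
      N - (R + V) + 1 ≤ hammingDist (E w c) (E w' c')) ∧
    (∀ (y : Fin N → F) (w w' : Fin R → F) (c c' : Fin V → F),
      hammingDist (E w c) y ≤ B → hammingDist (E w' c') y ≤ B → (w, c) = (w', c')) := by
  have key : ∀ (w w' : Fin R → F) (c c' : Fin V → F), (w, c) ≠ (w', c') →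
      N - (R + V) + 1 ≤ hammingDist (E w c) (E w' c') := by
    intro w w' c c' hne
    by_contra hlt
    push Not at hlt
    apply hne
    have hcard : (Finset.univ.filter fun n => E w c n = E w' c' n).card
        + hammingDist (E w c) (E w' c') = N := by
      have := Finset.card_filter_add_card_filter_not (s := (Finset.univ : Finset (Fin N)))
        (fun n => E w c n = E w' c' n)
      simpa [hammingDist] using this
    have := cv_key R V f hf ((Finset.univ.filter fun n => E w c n = E w' c' n).image a)
      (by rw [Finset.card_image_of_injective _ ha]; omega)
      (by
        intro x hx j
        obtain ⟨n, _, rfl⟩ := Finset.mem_image.1 hx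
        exact hfa n j) (w - w') (c - c')
      (by
        intro x hx
        obtain ⟨n, hn, rfl⟩ := Finset.mem_image.1 hx
        have hn := (Finset.mem_filter.1 hn).2
        rw [hE, hE] at hn
        simp only [Pi.sub_apply, sub_div, sub_mul, Finset.sum_sub_distrib]
        linear_combination hn)
    rw [sub_eq_zero.1 this.1, sub_eq_zero.1 this.2]
  refine ⟨by omega, key, ?_⟩
  intro y w w' c c' h1 h2
  by_contra hne
  have h3 := key w w' c c' hne
  have h4 := hammingDist_triangle_right (E w c) (E w' c') y
  omega
end

section
/- Let F be a finite field, let K >= 1, M >= 1 and T >= 1 be natural numbers, let a_1, ..., a_T be pairwise distinct elements of F, and let f_1, ..., f_M be elements of F with f_u != a_n for all u in [M] and n in [T]. Let the random vectors Y_{u,s} (u in [M], s in [T]) be independent and uniformly distributed on F^K. Then for every choice of e_1, ..., e_M in F^K, the joint distribution of the tuple ( e_u + (a_n - f_u) * sum_{s=1}^{T} a_n^{s-1} Y_{u,s} )_{u in [M], n in [T]} is the uniform distribution on (F^K)^{M x T}. In particular, this joint distribution does not depend on the vectors e_1, ..., e_M. -/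
theorem map_uniform_of_bijective {α β : Type*} [Fintype α] [Fintype β] [Nonempty α] [Nonempty β]
    (g : α → β) (hg : Function.Bijective g) :
    PMF.map g (PMF.uniformOfFintype α) = PMF.uniformOfFintype β := by
  classical
  ext b
  obtain ⟨x, rfl⟩ := hg.2 b
  rw [PMF.map_apply, tsum_eq_single x]
  · simp [Fintype.card_of_bijective hg]
  · intro y hy
    rw [if_neg]
    intro h
    exact hy (hg.1 h.symm)

/-- T-privacy of ACSA queries: with `Y u s` (`u ∈ [M]`, `s ∈ [T]`) independent uniform
random vectors on `F^K` (modeled as a single uniform random variable on the product),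
the tuple of query blocks `e u + (a n - f u) • ∑ s, (a n)^(s-1) • Y u s` observed by
`T` colluding servers with pairwise distinct evaluation points `a 1, …, a T` is
uniformly distributed on `(F^K)^(M × T)`; in particular its distribution does not
depend on the selection vectors `e u`. -/
theorem acsa_query_T_privacy
    {F : Type*} [Field F] [Fintype F] [DecidableEq F]
    (K M T : ℕ) (hK : 1 ≤ K) (hM : 1 ≤ M) (hT : 1 ≤ T)
    (a : Fin T → F) (ha : Function.Injective a)
    (f : Fin M → F) (hfa : ∀ (u : Fin M) (n : Fin T), f u ≠ a n)
    (e : Fin M → Fin K → F) :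
    PMF.map
      (fun (Y : Fin M → Fin T → Fin K → F) (p : Fin M × Fin T) =>
        e p.1 + (a p.2 - f p.1) • ∑ s : Fin T, ((a p.2) ^ (s : ℕ)) • Y p.1 s)
      (PMF.uniformOfFintype (Fin M → Fin T → Fin K → F))
    = PMF.uniformOfFintype (Fin M × Fin T → Fin K → F) := by
  apply map_uniform_of_bijective
  rw [Fintype.bijective_iff_injective_and_card]
  constructor
  · intro Y Z h
    have key : ∀ u k, (fun s => Y u s k - Z u s k) = 0 := by
      intro u k
      apply Matrix.eq_zero_of_mulVec_eq_zero (Matrix.det_vandermonde_ne_zero_iff.2 ha)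
      funext n
      have h1 := congrFun (congrFun h (u, n)) k
      have h2 : a n - f u ≠ 0 := sub_ne_zero.2 (hfa u n).symm
      simp only [Pi.add_apply, Pi.smul_apply, Finset.sum_apply, smul_eq_mul] at h1
      have h3 := mul_left_cancel₀ h2 (add_left_cancel h1)
      simp only [Matrix.mulVec, dotProduct, Matrix.vandermonde_apply, mul_sub,
        Finset.sum_sub_distrib, Pi.zero_apply]
      exact sub_eq_zero.2 h3
    funext u s k
    exact sub_eq_zero.1 (congrFun (key u k) s)
  · exact Fintype.card_congr (Equiv.curry _ _ _).symm
end

section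
/- Let F be a finite field, let K >= 1, M >= 1, K_c >= 1 and X >= 1 be natural numbers, let a_1, ..., a_X be pairwise distinct elements of F, and let f_{u,i} (u in [M], i in [K_c]) be elements of F with f_{u,i} != a_n for all u, i, n. Let the random vectors Z_{u,x} (u in [M], x in [X]) be independent and uniformly distributed on F^K. Then for every choice of data vectors W_{u,i} in F^K (u in [M], i in [K_c]), the joint distribution of the tuple ( sum_{i=1}^{K_c} (1/(a_n - f_{u,i})) W_{u,i} + sum_{x=1}^{X} a_n^{x-1} Z_{u,x} )_{u in [M], n in [X]} is the uniform distribution on (F^K)^{M x X}. In particular, this joint distribution does not depend on the data vectors W_{u,i}. -/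
theorem pmf_map_uniform_of_bijective {A B : Type*} [Fintype A] [Nonempty A] [Fintype B] [Nonempty B]
    (g : A → B) (hg : Function.Bijective g) :
    PMF.map g (PMF.uniformOfFintype A) = PMF.uniformOfFintype B := by
  ext b
  obtain ⟨x, rfl⟩ := hg.2 b
  rw [PMF.map_apply, tsum_eq_single x]
  · simp [Fintype.card_of_bijective hg]
  · intro y hy
    rw [if_neg]
    intro h
    exact hy (hg.1 h.symm)

/-- X-security of ACSA storage: with `Z u x` (`u ∈ [M]`, `x ∈ [X]`) independent
uniform random vectors on `F^K` (modeled as a single uniform random variable on the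
product), the tuple of storage blocks
`∑ i, (1/(a n - f u i)) • W u i + ∑ x, (a n)^(x-1) • Z u x`
held by `X` colluding servers with pairwise distinct evaluation points `a 1, …, a X`
is uniformly distributed on `(F^K)^(M × X)`; in particular its distribution does not
depend on the data vectors `W u i`. -/
theorem acsa_storage_X_security
    {F : Type*} [Field F] [Fintype F] [DecidableEq F]
    (K M Kc X : ℕ) (hK : 1 ≤ K) (hM : 1 ≤ M) (hKc : 1 ≤ Kc) (hX : 1 ≤ X)
    (a : Fin X → F) (ha : Function.Injective a)
    (f : Fin M → Fin Kc → F)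
    (hfa : ∀ (u : Fin M) (i : Fin Kc) (n : Fin X), f u i ≠ a n)
    (W : Fin M → Fin Kc → Fin K → F) :
    PMF.map
      (fun (Z : Fin M → Fin X → Fin K → F) (p : Fin M × Fin X) =>
        (∑ i : Fin Kc, (1 / (a p.2 - f p.1 i)) • W p.1 i) +
          ∑ x : Fin X, ((a p.2) ^ (x : ℕ)) • Z p.1 x)
      (PMF.uniformOfFintype (Fin M → Fin X → Fin K → F))
    = PMF.uniformOfFintype (Fin M × Fin X → Fin K → F) := by
  apply pmf_map_uniform_of_bijective
  rw [Fintype.bijective_iff_injective_and_card]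
  refine ⟨?_, Fintype.card_congr (Equiv.curry (Fin M) (Fin X) (Fin K → F)).symm⟩
  intro Z Z' h
  have hdet : (Matrix.vandermonde a).det ≠ 0 := Matrix.det_vandermonde_ne_zero_iff.2 ha
  have hinj := Matrix.mulVec_injective_of_isUnit
    ((Matrix.isUnit_iff_isUnit_det _).2 hdet.isUnit)
  funext u x k
  have key : (fun x => Z u x k) = (fun x => Z' u x k) := by
    apply hinj
    funext n
    have h1 := congrFun (congrFun h (u, n)) k
    simpa [Matrix.mulVec, dotProduct, Matrix.vandermonde_apply, Finset.sum_apply] using h1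
  exact congrFun key x
end

section
/- Let F be a finite field, let R >= 1 and X_Delta >= 1 be natural numbers, let a_1, ..., a_{X_Delta} be pairwise distinct elements of F, and let f_1, ..., f_R be elements of F with f_j != a_n for all j, n. Let the random scalars z_1, ..., z_{X_Delta} be independent and uniformly distributed on F. Then for every choice of increment symbols Delta_1, ..., Delta_R in F, the joint distribution of the tuple ( sum_{j=1}^{R} Delta_j / (a_n - f_j) + sum_{x=1}^{X_Delta} a_n^{x-1} z_x )_{n in [X_Delta]} is the uniform distribution on F^{X_Delta}. In particular, this joint distribution does not depend on Delta_1, ..., Delta_R. -/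
/-- X_Δ-security of ACSA increments: with `z 1, …, z X_Δ` independent uniform random
scalars on `F` (modeled as a single uniform random variable on the product), the tuple
of increment symbols `∑ j, Δ j / (a n - f j) + ∑ x, (a n)^(x-1) * z x` observed by
`X_Δ` colluding servers with pairwise distinct evaluation points `a 1, …, a X_Δ` is
uniformly distributed on `F^(X_Δ)`; in particular its distribution does not depend on
the increments `Δ j`. -/
theorem acsa_increment_XDelta_security
    {F : Type*} [Field F] [Fintype F] [DecidableEq F]
    (R XD : ℕ) (hR : 1 ≤ R) (hXD : 1 ≤ XD)
    (a : Fin XD → F) (ha : Function.Injective a)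
    (f : Fin R → F) (hfa : ∀ (j : Fin R) (n : Fin XD), f j ≠ a n)
    (Delta : Fin R → F) :
    PMF.map
      (fun (z : Fin XD → F) (n : Fin XD) =>
        (∑ j : Fin R, Delta j / (a n - f j)) + ∑ x : Fin XD, (a n) ^ (x : ℕ) * z x)
      (PMF.uniformOfFintype (Fin XD → F))
    = PMF.uniformOfFintype (Fin XD → F) := by
  set g : (Fin XD → F) → (Fin XD → F) := fun z n =>
    (∑ j : Fin R, Delta j / (a n - f j)) + ∑ x : Fin XD, (a n) ^ (x : ℕ) * z x with hg
  have hinj : Function.Injective g := by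
    intro z w h
    have hu : Function.Injective (Matrix.vandermonde a).mulVec := by
      rw [Matrix.mulVec_injective_iff_isUnit, Matrix.isUnit_iff_isUnit_det]
      exact isUnit_iff_ne_zero.mpr (Matrix.det_vandermonde_ne_zero_iff.mpr ha)
    apply hu
    funext n
    exact add_left_cancel (congrFun h n)
  have hbij : Function.Bijective g := Finite.injective_iff_bijective.mp hinj
  ext y
  obtain ⟨z, rfl⟩ := hbij.2 y
  rw [PMF.map_apply, tsum_eq_single z]
  · simp
  · intro w hw
    rw [if_neg]
    intro h
    exact hw (hinj h.symm)
end
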